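/- arXiv:1412.8158 — 2 statements merged into one kernel-verified Lean document; each statement's English description precedes it below -/
import Mathlib

section
/- Let f and g be analytic on the unit disk 𝔻 with f(0) = g(0) = 0, f'(0) = g'(0) = 1, and f, g nonvanishing on the punctured disk 0 < |z| < 1. Suppose f'(z) ≠ 0 and Re(1 + z f''(z)/f'(z)) > −1/2 for all z ∈ 𝔻, and Re g'(z) > 0 for all z ∈ 𝔻. Let r₉ ≈ 0.29399 be the unique root in (0,1) of (r − 3)(1 − r) − ((4 − 9r + 3r²)/r)·log(1 − r) = 0. Then the function F(z) = z^3/(f(z)g(z)) satisfies |F'(z)(z/F(z))^2 − 1| < 1 for every z with 0 < |z| < r₉; in particular F belongs to the class 𝒰 in the disk |z| < r₉. -/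
/-!
Write `A = f(z)/z = ∑ aₖ zᵏ` and `B = g(z)/z = ∑ bₘ zᵐ`, so that `z/F = AB` and
`F'(z) (z/F)² = AB - z(AB)'`. Hence `F'(z) (z/F)² - 1` is the negative of the double series
`∑ (k + m - 1) aₖ bₘ z^(k+m) + 1`, where the added `1` cancels the term `k = m = 0` and all other
weights `k + m - 1` are nonnegative. It is therefore dominated by the same series with
`|aₖ| ≤ (k+2)/2`, `b₀ = 1`, `|bₘ| ≤ 2/(m+1)` for `m ≥ 1`, and `|z|` in place of `z`. Summing the
majorant in closed form, it equals `1` exactly at a root `r₉` of the given equation, and it is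
strictly increasing in `|z|` because its coefficients are nonnegative.

Both coefficient bounds come from Carathéodory's inequality `|pₙ| ≤ 2` for functions of positive
real part with `p(0) = 1` (`norm_tc_le_two`). For `g` it is applied to `g'`. For `f` it is applied
to `1 + (2/3) z f''/f'`; the identity `f'' = (f''/f') f'` then gives a recursion for the Taylor
coefficients of `f'`, which bounds them by those of `(1 - z)⁻³` (`norm_tc_deriv_le`).
-/

/-! ### Taylor coefficients and Carathéodory's inequality -/

/-- The `n`-th Taylor coefficient at the origin. -/
noncomputable def tc (n : ℕ) (f : ℂ → ℂ) : ℂ := iteratedDeriv n f 0 / n.factorial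

lemma hasSum_tc {f : ℂ → ℂ} (hf : DifferentiableOn ℂ f (Metric.ball 0 1)) {z : ℂ} (hz : ‖z‖ < 1) :
    HasSum (fun n => tc n f * z ^ n) (f z) := by
  have h := Complex.hasSum_taylorSeries_on_ball hf (z := z) (by simpa using hz)
  convert! h using 2 with n
  simp [tc]; ring

lemma tc_deriv (n : ℕ) (f : ℂ → ℂ) : tc n (deriv f) = (n + 1) * tc (n + 1) f := by
  have : ((n : ℂ) + 1) ≠ 0 := by exact_mod_cast n.succ_ne_zero
  have h2 : (n.factorial : ℂ) ≠ 0 := by exact_mod_cast n.factorial_ne_zero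
  simp only [tc, iteratedDeriv_succ', Nat.factorial_succ]
  push_cast
  field_simp

lemma tc_mul (n : ℕ) {u v : ℂ → ℂ} (hu : AnalyticAt ℂ u 0) (hv : AnalyticAt ℂ v 0) :
    tc n (fun z => u z * v z) = ∑ i ∈ Finset.range (n + 1), tc i u * tc (n - i) v := by
  rw [tc, iteratedDeriv_fun_mul hu.contDiffAt hv.contDiffAt, Finset.sum_div]
  refine Finset.sum_congr rfl fun i hi => ?_
  have hi' : i ≤ n := by simpa [Nat.lt_succ_iff] using hi
  have h1 : (n.factorial : ℂ) ≠ 0 := by exact_mod_cast n.factorial_ne_zero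
  have h2 : (i.factorial : ℂ) ≠ 0 := by exact_mod_cast i.factorial_ne_zero
  have h3 : ((n - i).factorial : ℂ) ≠ 0 := by exact_mod_cast (n - i).factorial_ne_zero
  have h4 : (n.choose i : ℂ) * i.factorial * (n - i).factorial = n.factorial := by
    exact_mod_cast Nat.choose_mul_factorial_mul_factorial hi'
  simp only [tc]
  rw [div_mul_div_comm, div_eq_div_iff h1 (mul_ne_zero h2 h3), ← h4]
  ring

lemma tc_id_mul (n : ℕ) {v : ℂ → ℂ} (hv : AnalyticAt ℂ v 0) :
    tc (n + 1) (fun z => z * v z) = tc n v := by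
  rw [tc_mul (n + 1) (u := fun z => z) analyticAt_id hv, Finset.sum_eq_single 1]
  · simp [tc]
  · intro i _ hi
    have : tc i (fun z => z) = 0 := by
      simp [tc, iteratedDeriv_fun_id, hi]
    simp [this]
  · simp

open Real in
/-- Carathéodory's inequality on the circle of radius `R`: averaging `z⁻ⁿ p` over the circle gives
the coefficient, averaging `conj (zⁿ p)` gives `0`, and `z⁻ⁿ` is proportional to `conj zⁿ` there,
so the coefficient is the average of `z⁻ⁿ * 2 Re p`, where `Re p` is positive with average `1`. -/
lemma norm_tc_mul_pow_le {p : ℂ → ℂ} (hp : DifferentiableOn ℂ p (Metric.ball 0 1))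
    (hre : ∀ z ∈ Metric.ball (0 : ℂ) 1, 0 < (p z).re) (hp0 : p 0 = 1) {n : ℕ} (hn : n ≠ 0)
    {R : ℝ} (hR : 0 < R) (hR1 : R < 1) : ‖tc n p‖ * R ^ n ≤ 2 := by
  have hsub : Metric.closedBall (0 : ℂ) R ⊆ Metric.ball 0 1 := Metric.closedBall_subset_ball hR1
  have hd : DifferentiableOn ℂ p (Metric.closedBall 0 R) := hp.mono hsub
  have hsph : Metric.sphere (0 : ℂ) |R| ⊆ Metric.ball 0 1 := by
    rw [abs_of_pos hR]; exact Metric.sphere_subset_closedBall.trans hsub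
  have hdc : DiffContOnCl ℂ p (Metric.ball 0 R) := by
    apply DifferentiableOn.diffContOnCl
    rwa [closure_ball _ hR.ne']
  have hne : ∀ z ∈ Metric.sphere (0 : ℂ) |R|, z ≠ 0 := by
    intro z hz h
    subst h
    simp at hz
    exact hR.ne' (abs_eq_zero.1 hz.symm)
  have hpc : ContinuousOn p (Metric.sphere (0 : ℂ) |R|) := hp.continuousOn.mono hsph
  have x1 : circleAverage (fun z => 1 / z ^ n * p z) 0 R = tc n p := by
    have h := hdc.circleIntegral_one_div_sub_center_pow_smul hR n
    have h2 : (∮ z in C(0, R), (z - 0)⁻¹ • (1 / z ^ n * p z))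
        = ∮ z in C(0, R), (1 / (z - 0) ^ (n + 1)) • p z := by
      congr 1; ext z; simp [pow_succ]; ring
    rw [circleAverage_eq_circleIntegral hR.ne', h2, h, tc]
    have : (2 * (π : ℂ) * Complex.I) ≠ 0 := by simp [pi_ne_zero]
    simp only [smul_eq_mul]
    field_simp
  have x2 : circleAverage (fun z => z ^ n * p z) 0 R = 0 := by
    have : DiffContOnCl ℂ (fun z => z ^ n * p z) (Metric.ball 0 |R|) := by
      rw [abs_of_pos hR]
      apply DifferentiableOn.diffContOnCl
      rw [closure_ball _ hR.ne']
      exact (by fun_prop : DifferentiableOn ℂ (fun z : ℂ => z ^ n) _).mul hd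
    rw [this.circleAverage]
    simp [hn]
  have i2 : CircleIntegrable (fun z => z ^ n * p z) 0 R :=
    ContinuousOn.circleIntegrable' ((by fun_prop : ContinuousOn (fun z : ℂ => z ^ n) _).mul hpc)
  have i1 : CircleIntegrable (fun z => 1 / z ^ n * p z) 0 R := by
    refine ContinuousOn.circleIntegrable' (ContinuousOn.mul ?_ hpc)
    exact ContinuousOn.div (by fun_prop) (by fun_prop) fun z hz => pow_ne_zero _ (hne z hz)
  have x3 : circleAverage (fun z => (starRingEnd ℂ) (z ^ n * p z)) 0 R = 0 := by
    have := (Complex.conjCLE : ℂ →L[ℝ] ℂ).circleAverage_comp_comm i2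
    simpa [x2, Function.comp_def] using! this
  have i3 : CircleIntegrable (fun z => (starRingEnd ℂ) (z ^ n * p z)) 0 R :=
    ContinuousOn.circleIntegrable' (Complex.continuous_conj.comp_continuousOn
      ((by fun_prop : ContinuousOn (fun z : ℂ => z ^ n) _).mul hpc))
  have i4 : CircleIntegrable p 0 R := ContinuousOn.circleIntegrable' hpc
  have x4 : circleAverage (fun z => (p z).re) 0 R = 1 := by
    have := Complex.reCLM.circleAverage_comp_comm i4
    have h2 : circleAverage p 0 R = 1 := by
      rw [DiffContOnCl.circleAverage (by rwa [abs_of_pos hR]), hp0]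
    simpa [h2, Function.comp_def] using! this
  have x5 : tc n p = circleAverage (fun z => 1 / z ^ n * ((2 * (p z).re : ℝ) : ℂ)) 0 R := by
    have e : Set.EqOn (fun z => 1 / z ^ n * ((2 * (p z).re : ℝ) : ℂ))
        (fun z => 1 / z ^ n * p z
          + (((R : ℂ) ^ (2 * n))⁻¹) • (starRingEnd ℂ) (z ^ n * p z)) (Metric.sphere (0 : ℂ) |R|) := by
      intro z hz
      have hz0 := hne z hz
      have hzR : ‖z‖ = R := by simpa [abs_of_pos hR] using hz
      have hRc : (R : ℂ) ≠ 0 := by exact_mod_cast hR.ne'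
      have hc : (starRingEnd ℂ) z = (R : ℂ) ^ 2 / z := by
        rw [eq_div_iff hz0, mul_comm, Complex.mul_conj, Complex.normSq_eq_norm_sq, hzR]
        norm_cast
      have h2 : ((2 * (p z).re : ℝ) : ℂ) = p z + (starRingEnd ℂ) (p z) := by
        rw [Complex.add_conj]
      simp only [h2, map_mul, map_pow, hc, smul_eq_mul]
      rw [div_pow, ← pow_mul]
      field_simp
    rw [circleAverage_congr_sphere e, circleAverage_fun_add i1, x1, circleAverage_fun_smul, x3]
    · simp
    · exact i3.const_smul
  have key : ‖tc n p‖ ≤ 2 / R ^ n := by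
    rw [x5]
    calc _ = (2 * π)⁻¹ * ‖∫ θ in (0)..2 * π, 1 / (circleMap 0 R θ) ^ n *
              ((2 * (p (circleMap 0 R θ)).re : ℝ) : ℂ)‖ := by
            rw [circleAverage_def, norm_smul, Real.norm_of_nonneg (by positivity)]
      _ ≤ (2 * π)⁻¹ * ∫ θ in (0)..2 * π, ‖1 / (circleMap 0 R θ) ^ n *
              ((2 * (p (circleMap 0 R θ)).re : ℝ) : ℂ)‖ := by
            gcongr
            exact intervalIntegral.norm_integral_le_integral_norm (by positivity)
      _ = (2 * π)⁻¹ * ∫ θ in (0)..2 * π, (2 / R ^ n) * (p (circleMap 0 R θ)).re := by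
            congr 2; ext θ
            have := (hre _ (hsph (circleMap_mem_sphere' 0 R θ))).le
            rw [norm_mul, Complex.norm_of_nonneg (by positivity), norm_div, norm_pow,
              norm_circleMap_zero, abs_of_pos hR]
            simp; ring
      _ = (2 / R ^ n) * circleAverage (fun z => (p z).re) 0 R := by
            rw [circleAverage_def, intervalIntegral.integral_const_mul, smul_eq_mul]; ring
      _ = 2 / R ^ n := by rw [x4, mul_one]
  rwa [le_div_iff₀ (by positivity)] at key

/-- **Carathéodory's inequality** for the coefficients of a function of positive real part. -/
lemma norm_tc_le_two {p : ℂ → ℂ} (hp : DifferentiableOn ℂ p (Metric.ball 0 1))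
    (hre : ∀ z ∈ Metric.ball (0 : ℂ) 1, 0 < (p z).re) (hp0 : p 0 = 1) {n : ℕ} (hn : n ≠ 0) :
    ‖tc n p‖ ≤ 2 := by
  have ht : Filter.Tendsto (fun R : ℝ => ‖tc n p‖ * R ^ n) (nhdsWithin 1 (Set.Iio 1))
      (nhds (‖tc n p‖ * 1 ^ n)) :=
    ((by fun_prop : Continuous fun R : ℝ => ‖tc n p‖ * R ^ n).tendsto 1).mono_left
      nhdsWithin_le_nhds
  rw [one_pow, mul_one] at ht
  refine le_of_tendsto ht ?_
  filter_upwards [Ioo_mem_nhdsLT (zero_lt_one (α := ℝ))] with R hR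
  exact norm_tc_mul_pow_le hp hre hp0 hn hR.1 hR.2

/-! ### Coefficient bounds for `f` and `g` -/

/-- For `f` in the class `𝒞(-1/2)`, the coefficients of `f'` are bounded by those of `(1 - z)⁻³`. -/
lemma norm_tc_deriv_le {f : ℂ → ℂ} (hfa : AnalyticOnNhd ℂ f (Metric.ball (0:ℂ) 1))
    (hf1 : deriv f 0 = 1) (hfd : ∀ z ∈ Metric.ball (0:ℂ) 1, deriv f z ≠ 0)
    (hfC : ∀ z ∈ Metric.ball (0:ℂ) 1,
      -(1 / 2) < (1 + z * deriv (deriv f) z / deriv f z).re) (n : ℕ) :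
    ‖tc n (deriv f)‖ ≤ (n + 1) * (n + 2) / 2 := by
  have h0 : (0 : ℂ) ∈ Metric.ball (0 : ℂ) 1 := by simp
  have hh : AnalyticOnNhd ℂ (deriv f) (Metric.ball 0 1) := hfa.deriv
  set q : ℂ → ℂ := fun z => deriv (deriv f) z / deriv f z with hq
  have hqa : AnalyticOnNhd ℂ q (Metric.ball 0 1) := hh.deriv.div hh hfd
  have hqb : ∀ k, ‖tc k q‖ ≤ 3 := by
    intro k
    have hp := norm_tc_le_two (p := fun z => 1 + (2 / 3) * (z * q z)) (n := k + 1) ?_ ?_ (by simp)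
      (by simp)
    · have hzq : AnalyticAt ℂ (fun z => z * q z) 0 := analyticAt_id.mul (hqa 0 h0)
      have : tc (k + 1) (fun z => 1 + (2 / 3) * (z * q z)) = (2 / 3) * tc k q := by
        rw [← tc_id_mul k (hqa 0 h0)]
        simp only [tc]
        rw [iteratedDeriv_const_add (by simp), iteratedDeriv_const_mul _ hzq.contDiffAt]
        ring
      rw [this, norm_mul] at hp
      norm_num at hp
      linarith
    · have := hqa.differentiableOn
      fun_prop
    · intro z hz
      have := hfC z hz
      have e : (1 + (2 / 3) * (z * q z)).re = 1 + (2 / 3) * (z * q z).re := by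
        have : (2 / 3 : ℂ) = ((2 / 3 : ℝ) : ℂ) := by norm_num
        rw [this, Complex.add_re, Complex.re_ofReal_mul, Complex.one_re]
      rw [e]
      rw [mul_div_assoc, Complex.add_re, Complex.one_re] at this
      simp only [hq]
      linarith
  induction n using Nat.strong_induction_on with
  | _ n ih =>
  rcases n with _ | n
  · simp [tc, hf1]
  · have hrec : ((n : ℂ) + 1) * tc (n + 1) (deriv f)
        = ∑ i ∈ Finset.range (n + 1), tc i q * tc (n - i) (deriv f) := by
      rw [← tc_deriv, ← tc_mul n (hqa 0 h0) (hh 0 h0)]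
      have : deriv (deriv f) =ᶠ[nhds 0] fun z => q z * deriv f z := by
        filter_upwards [Metric.isOpen_ball.mem_nhds h0] with z hz
        rw [hq]; simp only; rw [div_mul_cancel₀ _ (hfd z hz)]
      simp only [tc, this.iteratedDeriv_eq n]
    have hb : ‖∑ i ∈ Finset.range (n + 1), tc i q * tc (n - i) (deriv f)‖
        ≤ ∑ i ∈ Finset.range (n + 1), (fun j : ℕ => 3 * (((j : ℝ) + 1) * (j + 2) / 2)) (n - i) := by
      refine norm_sum_le_of_le _ fun i _ => ?_
      rw [norm_mul]
      exact mul_le_mul (hqb i) (ih (n - i) (by omega)) (norm_nonneg _) (by norm_num)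
    rw [Finset.sum_flip (fun j : ℕ => 3 * (((j : ℝ) + 1) * (j + 2) / 2))] at hb
    -- the recursion is an equality for `(1 - z)⁻³`, which closes the induction
    have hsum : ∀ N : ℕ, ∑ j ∈ Finset.range N, 3 * (((j : ℝ) + 1) * (j + 2) / 2)
        = N * (N + 1) * (N + 2) / 2 := by
      intro N
      induction N with
      | zero => simp
      | succ N ihN => rw [Finset.sum_range_succ, ihN]; push_cast; ring
    rw [hsum, ← hrec, norm_mul] at hb
    have hn : ‖(n : ℂ) + 1‖ = n + 1 := by
      have : ((n : ℂ) + 1) = ((n + 1 : ℝ) : ℂ) := by push_cast; rfl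
      rw [this, Complex.norm_of_nonneg (by positivity)]
    rw [hn] at hb
    push_cast at hb ⊢
    have hpos : (0 : ℝ) < n + 1 := by positivity
    refine le_of_mul_le_mul_left (hb.trans (le_of_eq ?_)) hpos
    ring

/-- Majorant of the Taylor coefficients of `f z / z`. -/
noncomputable def al (k : ℕ) : ℝ := (k + 2) / 2

/-- Majorant of the Taylor coefficients of `g z / z`. The constant coefficient is exactly `1`, where
the formula `2 / (m + 1)` would give `2`. -/
noncomputable def be (m : ℕ) : ℝ := if m = 0 then 1 else 2 / (m + 1)

lemma norm_tc_succ_le_al {f : ℂ → ℂ} (hfa : AnalyticOnNhd ℂ f (Metric.ball (0:ℂ) 1))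
    (hf1 : deriv f 0 = 1) (hfd : ∀ z ∈ Metric.ball (0:ℂ) 1, deriv f z ≠ 0)
    (hfC : ∀ z ∈ Metric.ball (0:ℂ) 1,
      -(1 / 2) < (1 + z * deriv (deriv f) z / deriv f z).re) (k : ℕ) :
    ‖tc (k + 1) f‖ ≤ al k := by
  have h := norm_tc_deriv_le hfa hf1 hfd hfC k
  have hn : ‖(k : ℂ) + 1‖ = k + 1 := by
    have : ((k : ℂ) + 1) = ((k + 1 : ℝ) : ℂ) := by push_cast; rfl
    rw [this, Complex.norm_of_nonneg (by positivity)]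
  rw [tc_deriv, norm_mul, hn] at h
  have hpos : (0 : ℝ) < k + 1 := by positivity
  refine le_of_mul_le_mul_left (h.trans (le_of_eq ?_)) hpos
  rw [al]; ring

lemma norm_tc_succ_le_be {g : ℂ → ℂ} (hga : AnalyticOnNhd ℂ g (Metric.ball (0:ℂ) 1))
    (hg1 : deriv g 0 = 1) (hgR : ∀ z ∈ Metric.ball (0:ℂ) 1, 0 < (deriv g z).re) (k : ℕ) :
    ‖tc (k + 1) g‖ ≤ be k := by
  rcases eq_or_ne k 0 with rfl | hk
  · simp [tc, be, hg1]
  · have h := norm_tc_le_two hga.deriv.differentiableOn hgR hg1 hk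
    have hn : ‖(k : ℂ) + 1‖ = k + 1 := by
      have : ((k : ℂ) + 1) = ((k + 1 : ℝ) : ℂ) := by push_cast; rfl
      rw [this, Complex.norm_of_nonneg (by positivity)]
    rw [tc_deriv, norm_mul, hn] at h
    rw [be, if_neg hk, le_div_iff₀ (by positivity)]
    linarith

/-! ### Closed forms of the majorants -/

lemma be_nonneg (m : ℕ) : 0 ≤ be m := by
  unfold be; split_ifs <;> positivity

lemma al_nonneg (m : ℕ) : 0 ≤ al m := by
  unfold al; positivity

lemma hasSum_al {r : ℝ} (h0 : 0 < r) (h1 : r < 1) :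
    HasSum (fun k => al k * r ^ k) ((1 / (1 - r) ^ 2 + 1 / (1 - r)) / 2) := by
  have hr : ‖r‖ < 1 := by rwa [Real.norm_of_nonneg h0.le]
  have a1 := hasSum_choose_mul_geometric_of_norm_lt_one 1 hr
  have a0 := hasSum_geometric_of_norm_lt_one hr
  rw [← one_div] at a0
  convert! (a1.add a0).div_const 2 using 2 with k
  simp [al]; ring

lemma hasSum_mul_al {r : ℝ} (h0 : 0 < r) (h1 : r < 1) :
    HasSum (fun k : ℕ => k * (al k * r ^ k))
      (1 / (1 - r) ^ 3 - (1 / (1 - r) ^ 2 + 1 / (1 - r)) / 2) := by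
  have hr : ‖r‖ < 1 := by rwa [Real.norm_of_nonneg h0.le]
  have a1 := hasSum_choose_mul_geometric_of_norm_lt_one 2 hr
  convert! a1.sub (hasSum_al h0 h1) using 2 with k
  rw [Nat.cast_choose_two]
  push_cast
  simp [al]; ring

lemma hasSum_log {r : ℝ} (h0 : 0 < r) (h1 : r < 1) :
    HasSum (fun k : ℕ => 2 / ((k : ℝ) + 1) * r ^ k) (-2 * Real.log (1 - r) / r) := by
  have a := (Real.hasSum_pow_div_log_of_abs_lt_one (x := r) (by rwa [abs_of_pos h0])).mul_left (2 / r)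
  convert! a using 1
  · ext k
    have : (k : ℝ) + 1 ≠ 0 := by positivity
    field_simp
    ring
  · ring

lemma hasSum_be {r : ℝ} (h0 : 0 < r) (h1 : r < 1) :
    HasSum (fun k => be k * r ^ k) (-2 * Real.log (1 - r) / r - 1) := by
  convert! (hasSum_log h0 h1).sub (hasSum_ite_eq 0 (1 : ℝ)) using 2 with k
  rcases eq_or_ne k 0 with rfl | hk
  · simp [be]; norm_num
  · simp [be, hk]

lemma hasSum_mul_be {r : ℝ} (h0 : 0 < r) (h1 : r < 1) :
    HasSum (fun k : ℕ => k * (be k * r ^ k)) (2 / (1 - r) - (-2 * Real.log (1 - r) / r)) := by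
  have hr : ‖r‖ < 1 := by rwa [Real.norm_of_nonneg h0.le]
  have a0 := (hasSum_geometric_of_norm_lt_one hr).mul_left 2
  convert! a0.sub (hasSum_log h0 h1) using 2 with k
  rcases eq_or_ne k 0 with rfl | hk
  · simp
  · have : (k : ℝ) + 1 ≠ 0 := by positivity
    simp only [be, hk, if_false]
    field_simp; ring

lemma hasSum_prod {𝕜 : Type*} [RCLike 𝕜] {u v : ℕ → 𝕜} {a b : 𝕜} (hu : HasSum u a)
    (hv : HasSum v b) : HasSum (fun x : ℕ × ℕ => u x.1 * v x.2) (a * b) :=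
  hu.mul hv (summable_mul_of_summable_norm hu.summable.norm hv.summable.norm)

/-- With `a, b` the values of two power series and `a', b'` those of `z` times their derivatives,
the double series for `z (AB)' - AB`, plus a `1` placed at the index `(0, 0)`. -/
lemma hasSum_weighted {𝕜 : Type*} [RCLike 𝕜] {u v : ℕ → 𝕜} {a b a' b' : 𝕜} (hu : HasSum u a)
    (hv : HasSum v b) (hu' : HasSum (fun k : ℕ => k * u k) a')
    (hv' : HasSum (fun k : ℕ => k * v k) b') :
    HasSum (fun x : ℕ × ℕ => ((x.1 : 𝕜) + x.2 - 1) * (u x.1 * v x.2) + if x = 0 then 1 else 0)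
      (a' * b + a * b' - a * b + 1) := by
  refine HasSum.add ?_ (hasSum_ite_eq 0 (1 : 𝕜))
  convert! ((hasSum_prod hu' hv).add (hasSum_prod hu hv')).sub (hasSum_prod hu hv) using 2 with x
  ring

/-- At a root of the radius equation the closed form of the majorant of `z (AB)' - AB` vanishes. -/
lemma root_identity {r : ℝ} (h0 : 0 < r) (h1 : r < 1)
    (h : (r - 3) * (1 - r) - ((4 - 9 * r + 3 * r ^ 2) / r) * Real.log (1 - r) = 0) :
    (1 / (1 - r) ^ 3 - (1 / (1 - r) ^ 2 + 1 / (1 - r)) / 2) * (-2 * Real.log (1 - r) / r - 1)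
      + (1 / (1 - r) ^ 2 + 1 / (1 - r)) / 2 * (2 / (1 - r) - (-2 * Real.log (1 - r) / r))
      - (1 / (1 - r) ^ 2 + 1 / (1 - r)) / 2 * (-2 * Real.log (1 - r) / r - 1) = 0 := by
  have h2 : (1 - r) ≠ 0 := by linarith
  generalize Real.log (1 - r) = L at *
  have : (1 / (1 - r) ^ 3 - (1 / (1 - r) ^ 2 + 1 / (1 - r)) / 2) * (-2 * L / r - 1)
      + (1 / (1 - r) ^ 2 + 1 / (1 - r)) / 2 * (2 / (1 - r) - (-2 * L / r))
      - (1 / (1 - r) ^ 2 + 1 / (1 - r)) / 2 * (-2 * L / r - 1)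
      = -((r - 3) * (1 - r) - ((4 - 9 * r + 3 * r ^ 2) / r) * L) / (1 - r) ^ 3 := by
    field_simp
    ring
  rw [this, h]; simp

/-! ### The radius of univalence -/

/-- The series of `f(z)/z` and of `z` times its derivative, the latter being `f'(z) - f(z)/z`. -/
lemma series_tc {f : ℂ → ℂ} (hfa : AnalyticOnNhd ℂ f (Metric.ball (0:ℂ) 1)) (hf0 : f 0 = 0)
    {z : ℂ} (hz0 : z ≠ 0) (hz : ‖z‖ < 1) :
    HasSum (fun k => tc (k + 1) f * z ^ k) (f z / z) ∧
    HasSum (fun k : ℕ => k * (tc (k + 1) f * z ^ k)) (deriv f z - f z / z) := by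
  have h1 : HasSum (fun k => tc (k + 1) f * z ^ k) (f z / z) := by
    have h := (hasSum_nat_add_iff' 1).2 (hasSum_tc hfa.differentiableOn hz)
    have e : tc 0 f = 0 := by simp [tc, hf0]
    simp only [Finset.range_one, Finset.sum_singleton, e, zero_mul, sub_zero] at h
    convert! h.div_const z using 2 with k
    field_simp
    ring
  refine ⟨h1, ?_⟩
  convert! (hasSum_tc hfa.deriv.differentiableOn hz).sub h1 using 2 with k
  rw [tc_deriv]; ring


theorem radius_univalence_Cminus_R
    (f g F : ℂ → ℂ)
    (hfa : AnalyticOnNhd ℂ f (Metric.ball (0:ℂ) 1))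
    (hga : AnalyticOnNhd ℂ g (Metric.ball (0:ℂ) 1))
    (hf0 : f 0 = 0) (hf1 : deriv f 0 = 1) (hg0 : g 0 = 0) (hg1 : deriv g 0 = 1)
    (hfne : ∀ z : ℂ, 0 < ‖z‖ → ‖z‖ < 1 → f z ≠ 0)
    (hgne : ∀ z : ℂ, 0 < ‖z‖ → ‖z‖ < 1 → g z ≠ 0)
    (hfd : ∀ z ∈ Metric.ball (0:ℂ) 1, deriv f z ≠ 0)
    (hfC : ∀ z ∈ Metric.ball (0:ℂ) 1,
      -(1 / 2) < (1 + z * deriv (deriv f) z / deriv f z).re)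
    (hgR : ∀ z ∈ Metric.ball (0:ℂ) 1, 0 < (deriv g z).re)
    (r9 : ℝ) (hr9mem : r9 ∈ Set.Ioo (0:ℝ) 1)
    (hr9root : (r9 - 3) * (1 - r9) - ((4 - 9 * r9 + 3 * r9 ^ 2) / r9) * Real.log (1 - r9) = 0)
    (hr9uniq : ∀ r ∈ Set.Ioo (0:ℝ) 1, (r - 3) * (1 - r) - ((4 - 9 * r + 3 * r ^ 2) / r) * Real.log (1 - r) = 0 → r = r9)
    (hF : ∀ z : ℂ, F z = z ^ 3 / (f z * g z)) :
    ∀ z : ℂ, 0 < ‖z‖ → ‖z‖ < r9 →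
      ‖deriv F z * (z / F z) ^ 2 - 1‖ < 1 := by
  have hlt1 : r9 < 1 := hr9mem.2
  intro z hz0 hzr
  have hz1 : ‖z‖ < 1 := hzr.trans hlt1
  have hzne : z ≠ 0 := norm_pos_iff.1 hz0
  have hzb : z ∈ Metric.ball (0 : ℂ) 1 := by simpa using hz1
  obtain ⟨sA, sA'⟩ := series_tc hfa hf0 hzne hz1
  obtain ⟨sB, sB'⟩ := series_tc hga hg0 hzne hz1
  have hS := hasSum_weighted sA sB sA' sB'
  have hM := hasSum_weighted (hasSum_al hz0 hz1) (hasSum_be hz0 hz1) (hasSum_mul_al hz0 hz1)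
    (hasSum_mul_be hz0 hz1)
  have hM9 := hasSum_weighted (hasSum_al hr9mem.1 hlt1) (hasSum_be hr9mem.1 hlt1)
    (hasSum_mul_al hr9mem.1 hlt1) (hasSum_mul_be hr9mem.1 hlt1)
  rw [root_identity hr9mem.1 hlt1 hr9root, zero_add] at hM9
  have hterm : ∀ x : ℕ × ℕ, x ≠ 0 → (0 : ℝ) ≤ (x.1 : ℝ) + x.2 - 1 := by
    rintro ⟨i, j⟩ hx
    have : 1 ≤ i + j := by
      by_contra hc
      apply hx
      ext <;> simp <;> omega
    have : (1 : ℝ) ≤ i + j := by exact_mod_cast this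
    simp only
    linarith
  have hle := hS.norm_le_of_bounded hM (by
    intro x
    rcases eq_or_ne x 0 with rfl | hx
    · -- both sides vanish here: the weight `-1` of the constant term cancels the added `1`
      have e1 : tc 1 f = 1 := by simp [tc, hf1]
      have e2 : tc 1 g = 1 := by simp [tc, hg1]
      simp [al, be, e1, e2]
    · simp only [hx, if_false, add_zero]
      have hw : ‖((x.1 : ℂ) + x.2 - 1)‖ = (x.1 : ℝ) + x.2 - 1 := by
        rw [← Complex.norm_of_nonneg (hterm x hx)]
        push_cast; rfl
      rw [norm_mul, hw, norm_mul, norm_mul, norm_mul, norm_pow, norm_pow]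
      have := norm_tc_succ_le_al hfa hf1 hfd hfC x.1
      have := norm_tc_succ_le_be hga hg1 hgR x.2
      have := hterm x hx
      have := al_nonneg x.1
      gcongr)
  -- strictness comes from the index `(1, 1)`, whose weight `1 + 1 - 1` is positive
  have hlt := hasSum_lt (i := (1, 1)) (by
    intro x
    rcases eq_or_ne x 0 with rfl | hx
    · simp
    · simp only [hx, if_false, add_zero]
      have := hterm x hx
      have := al_nonneg x.1
      have := be_nonneg x.2
      have := mul_nonneg (al_nonneg x.1) (pow_nonneg hr9mem.1.le x.1)
      gcongr) (by
    have : ((1, 1) : ℕ × ℕ) ≠ 0 := by simp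
    have h2 : ‖z‖ * ‖z‖ < r9 * r9 := by gcongr
    simp only [this, if_false, al, be]
    norm_num
    nlinarith) hM hM9
  refine lt_of_eq_of_lt ?_ (hle.trans_lt hlt)
  have hfz := hfne z hz0 hz1
  have hgz := hgne z hz0 hz1
  have hFd : HasDerivAt F ((3 * z ^ 2 * (f z * g z) - z ^ 3 * (deriv f z * g z + f z * deriv g z))
      / (f z * g z) ^ 2) z := by
    have hF' : F = fun z => z ^ 3 / (f z * g z) := funext hF
    rw [hF']
    have a := hasDerivAt_pow 3 z
    have b := (hfa z hzb).differentiableAt.hasDerivAt.mul (hga z hzb).differentiableAt.hasDerivAt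
    simpa using! a.div b (mul_ne_zero hfz hgz)
  -- the bounded double series is the negative of `F'(z) (z / F z) ^ 2 - 1`
  rw [hFd.deriv, hF z, ← norm_neg]
  congr 1
  field_simp
  ring
end

section
/- For every real number ν ≥ −7/8 and every integer n ≥ 2, one has 4^{n−1}·n!·(ν+1)(ν+2)⋯(ν+n−1) ≥ 1; equivalently, the Taylor coefficient |(-1)^{n−1} Γ(ν+1)/(4^{n−1}(n−1)! Γ(ν+n))| of the normalized Bessel function f_ν(z) = z + Σ_{n≥2} (−1)^{n−1} Γ(ν+1)/(4^{n−1}(n−1)! Γ(ν+n)) z^n is at most n for all n ≥ 2. -/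
/-!
Passing from `n` to `n + 1` multiplies the product `4^{n-1} n! (ν+1)⋯(ν+n-1)` by
`4 (n+1) (ν+n)`, which is at least `1` for `n ≥ 2` and `ν ≥ -7/8`. At `n = 2` the product is
`8 (ν+1) ≥ 1`, which is exactly the hypothesis on `ν`, so the bound follows by induction.
The functional equation of `Γ` gives `Γ(ν+n) = Γ(ν+1) (ν+1)⋯(ν+n-1)`; since `Γ(ν+1) > 0`, it
cancels from the Taylor coefficient, and the bound on the coefficient is the product bound
divided by `(n-1)!`.
-/

/-- The product bound, indexed by `m = n - 2`. -/
lemma one_le_bessel_prod (ν : ℝ) (hν : -(7 / 8 : ℝ) ≤ ν) (m : ℕ) :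
    1 ≤ (4 : ℝ) ^ (m + 1) * ((m + 2).factorial : ℝ) *
      ∏ k ∈ Finset.Icc 1 (m + 1), (ν + (k : ℝ)) := by
  induction m with
  | zero =>
    norm_num [Nat.factorial]
    linarith
  | succ m ih =>
    rw [Finset.prod_Icc_succ_top (by omega), Nat.factorial_succ (m + 2), pow_succ]
    have hm : (0 : ℝ) ≤ m := m.cast_nonneg
    have hfac : (1 : ℝ) ≤ 4 * ((m : ℝ) + 3) * (ν + (m + 2)) := by nlinarith
    refine (one_le_mul_of_one_le_of_one_le ih hfac).trans_eq ?_
    push_cast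
    ring

lemma Gamma_add_eq_mul_prod (ν : ℝ) (hν : -1 < ν) (m : ℕ) :
    Real.Gamma (ν + ((m + 1 : ℕ) : ℝ)) =
      Real.Gamma (ν + 1) * ∏ k ∈ Finset.Icc 1 m, (ν + (k : ℝ)) := by
  induction m with
  | zero => simp
  | succ m ih =>
    have hm : (0 : ℝ) ≤ m := m.cast_nonneg
    have hne : ν + ((m + 1 : ℕ) : ℝ) ≠ 0 := by
      push_cast
      linarith
    rw [Finset.prod_Icc_succ_top (by omega), ← mul_assoc, ← ih, Nat.cast_succ (m + 1),
      ← add_assoc, Real.Gamma_add_one hne, mul_comm]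

/-- For `ν ≥ -7/8` and `n ≥ 2` one has
`4^{n-1} n! (ν+1)⋯(ν+n-1) ≥ 1`; equivalently the `n`-th Taylor coefficient of the
normalized Bessel function `f_ν` has absolute value at most `n`. -/
theorem bessel_normalized_coeff_le_n :
    (∀ (ν : ℝ) (n : ℕ), -(7 / 8 : ℝ) ≤ ν → 2 ≤ n →
      1 ≤ (4 : ℝ) ^ (n - 1) * (n.factorial : ℝ) *
        ∏ k ∈ Finset.Icc 1 (n - 1), (ν + (k : ℝ))) ∧
    (∀ (ν : ℝ) (n : ℕ), -(7 / 8 : ℝ) ≤ ν → 2 ≤ n →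
      |Real.Gamma (ν + 1) /
        ((4 : ℝ) ^ (n - 1) * ((n - 1).factorial : ℝ) * Real.Gamma (ν + (n : ℝ)))| ≤ (n : ℝ)) := by
  refine ⟨fun ν n hν hn => ?_, fun ν n hν hn => ?_⟩
  · obtain ⟨m, rfl⟩ := Nat.exists_eq_add_of_le' hn
    exact one_le_bessel_prod ν hν m
  · obtain ⟨m, rfl⟩ := Nat.exists_eq_add_of_le' hn
    have hprod := one_le_bessel_prod ν hν m
    have hΓ : 0 < Real.Gamma (ν + 1) := Real.Gamma_pos_of_pos (by linarith)
    have hP : 0 < ∏ k ∈ Finset.Icc 1 (m + 1), (ν + (k : ℝ)) := by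
      refine Finset.prod_pos fun k hk => ?_
      have hk1 : (1 : ℝ) ≤ k := by exact_mod_cast (Finset.mem_Icc.mp hk).1
      linarith
    rw [show m + 2 - 1 = m + 1 by omega, Gamma_add_eq_mul_prod ν (by linarith) (m + 1)]
    rw [Nat.factorial_succ (m + 1), Nat.cast_mul] at hprod
    generalize ∏ k ∈ Finset.Icc 1 (m + 1), (ν + (k : ℝ)) = P at hP hprod ⊢
    rw [abs_of_pos (by positivity), div_le_iff₀ (by positivity)]
    refine (le_mul_of_one_le_right hΓ.le hprod).trans_eq ?_
    ring
end
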